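/- arXiv:math/0702704 — 4 statements merged into one kernel-verified Lean document; each statement's English description precedes it below -/
import Mathlib

section
/- Let c, h ∈ ℝ. For i = 1, 2 let η_i be a unitary representation of 𝔎 on a complex inner product space V_i with η_i(C) = c·id, and let Ψ_i ∈ V_i be a unit vector such that η_i(k_n)Ψ_i = hΨ_i for all n > 0 and such that V_i is spanned by the vectors η_i(k_{n_1})⋯η_i(k_{n_r})Ψ_i (r ∈ ℕ, n_1, …, n_r ∈ ℤ ∖ {0}). Then the assignment η_1(k_{n_1})⋯η_1(k_{n_r})Ψ_1 ↦ η_2(k_{n_1})⋯η_2(k_{n_r})Ψ_2 extends to a well-defined ℂ-linear inner-product-preserving bijection W : V_1 → V_2 with WΨ_1 = Ψ_2 and W η_1(x) = η_2(x) W for all x ∈ 𝔎. -/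
/-!
All inner products of the vectors `k_{n₁}⋯k_{n_r}Ψ` are determined by `c` and `h`, so the two
cyclic representations have the same Gram matrix, and are therefore unitarily equivalent.

By unitarity every such inner product is an expectation value `⟨Ψ, k_{n₁}⋯k_{n_r}Ψ⟩`, and these
are computed by induction on `r` (`vacExp_eq`). If `n₁ < 0`, then moving `k_{n₁}` to the left
slot yields the factor `h` (which is real) and a shorter word; if `n₁ = 0` the value vanishes; if
`n₁ > 0`, the letter `k_{n₁}` is commuted to the right until it meets `Ψ` and yields the
factor `h` (`vacExp_eq_of_pos`). Each commutator is a combination of shorter words because `C` acts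
as the scalar `c`.

For the map `W`, let `wordMap η Ψ` send the free vector space on all words onto the representation
space. The maps for the two representations have equal pulled-back inner products, hence equal
kernels, so `W` is obtained by composing the second with a linear section of the first.
-/

local notation "⟪" x ", " y "⟫" => @inner ℂ _ _ x y

/-- A unitary representation of the Lie algebra `𝔎` (the subalgebra of the
Virasoro algebra spanned by `{k_n = l_0 - l_n : n ∈ ℤ ∖ {0}} ∪ {C}`) on a
complex inner product space `V`, described through the images
`K n` of the basis elements `k n` (with `K 0 = 0`, since `k_0 = 0`) and the
image `Cop` of `C`.  The fields record precisely the bracket relations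
`[k_r, k_m] = r k_r - m k_m - (r-m) k_{r+m} + (C/12)(r³-r) δ_{r+m,0}`,
`[k_r, C] = 0` of `𝔎`, and unitarity with respect to the involution `θ`
determined by `θ(k_n) = k_{-n}`, `θ(C) = C`. -/
structure KRep (V : Type*) [NormedAddCommGroup V] [InnerProductSpace ℂ V] where
  K : ℤ → Module.End ℂ V
  Cop : Module.End ℂ V
  K_zero : K 0 = 0
  comm : ∀ r m : ℤ, ⁅K r, K m⁆ =
    (r : ℂ) • K r - (m : ℂ) • K m - ((r - m : ℤ) : ℂ) • K (r + m) +
      (if r + m = 0 then (((r ^ 3 - r : ℤ) : ℂ) / 12) • Cop else 0)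
  commC : ∀ r : ℤ, ⁅K r, Cop⁆ = 0
  unitary : ∀ (n : ℤ) (u v : V), ⟪K n u, v⟫ = ⟪u, K (-n) v⟫
  unitaryC : ∀ u v : V, ⟪Cop u, v⟫ = ⟪u, Cop v⟫

/-- The vector `k_{n₁}⋯k_{n_r}Ψ` attached to a word `[n₁, …, n_r]`; zero letters are allowed
(and give the zero vector). -/
def wordVec {V : Type*} [NormedAddCommGroup V] [InnerProductSpace ℂ V] (η : KRep V) (Ψ : V)
    (ns : List ℤ) : V :=
  (ns.map η.K).prod Ψ

/-- The expectation value `⟨Ψ, k_{n₁}⋯k_{n_r}Ψ⟩` of a word. -/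
noncomputable def vacExp {V : Type*} [NormedAddCommGroup V] [InnerProductSpace ℂ V] (η : KRep V)
    (Ψ : V) (ns : List ℤ) : ℂ :=
  ⟪Ψ, wordVec η Ψ ns⟫

/-- The linear map from the free vector space on words sending `[n₁, …, n_r]` to
`k_{n₁}⋯k_{n_r}Ψ`. -/
noncomputable def wordMap {V : Type*} [NormedAddCommGroup V] [InnerProductSpace ℂ V] (η : KRep V)
    (Ψ : V) : (List ℤ →₀ ℂ) →ₗ[ℂ] V :=
  Finsupp.linearCombination ℂ (wordVec η Ψ)

/-- `Ψ` is a unit vector with `k_n Ψ = h Ψ` for all `n > 0`, in a representation of central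
charge `c`. Cyclicity of `Ψ` is not part of the notion. -/
structure IsVacuum {V : Type*} [NormedAddCommGroup V] [InnerProductSpace ℂ V] (c h : ℝ)
    (η : KRep V) (Ψ : V) : Prop where
  charge : η.Cop = (c : ℂ) • 1
  norm_eq : ‖Ψ‖ = 1
  eigen : ∀ n : ℤ, 0 < n → η.K n Ψ = (h : ℂ) • Ψ

section OneRep

variable {V : Type*} [NormedAddCommGroup V] [InnerProductSpace ℂ V] (η : KRep V) (Ψ : V)

lemma wordVec_cons (n : ℤ) (ns : List ℤ) :
    wordVec η Ψ (n :: ns) = η.K n (wordVec η Ψ ns) := by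
  simp [wordVec]

lemma wordVec_append (p ns : List ℤ) :
    wordVec η Ψ (p ++ ns) = (p.map η.K).prod (wordVec η Ψ ns) := by
  simp [wordVec]

lemma wordMap_single (ns : List ℤ) (a : ℂ) :
    wordMap η Ψ (Finsupp.single ns a) = a • wordVec η Ψ ns := by
  simp [wordMap]

lemma wordMap_surjective
    (hspan : Submodule.span ℂ {w : V | ∃ ns : List ℤ, (∀ n ∈ ns, n ≠ 0) ∧
        w = (ns.map η.K).prod Ψ} = ⊤) :
    Function.Surjective (wordMap η Ψ) := by
  rw [← LinearMap.range_eq_top, eq_top_iff, ← hspan, Submodule.span_le]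
  rintro w ⟨ns, -, rfl⟩
  exact ⟨Finsupp.single ns 1, by rw [wordMap_single, one_smul, wordVec]⟩

lemma vacExp_neg_cons (h : ℝ) (hev : ∀ n : ℤ, 0 < n → η.K n Ψ = (h : ℂ) • Ψ)
    (n : ℤ) (hn : n < 0) (ns : List ℤ) :
    vacExp η Ψ (n :: ns) = h * vacExp η Ψ ns := by
  have hu := η.unitary (-n) Ψ (wordVec η Ψ ns)
  rw [neg_neg, hev _ (by omega), inner_smul_left, Complex.conj_ofReal] at hu
  rw [vacExp, wordVec_cons, ← hu, vacExp]

lemma vacExp_append_pos (h : ℝ) (hev : ∀ n : ℤ, 0 < n → η.K n Ψ = (h : ℂ) • Ψ)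
    (n : ℤ) (hn : 0 < n) (p : List ℤ) :
    vacExp η Ψ (p ++ [n]) = h * vacExp η Ψ p := by
  have hv : wordVec η Ψ [n] = (h : ℂ) • Ψ := by simp [wordVec, hev n hn]
  rw [vacExp, wordVec_append, hv, map_smul, inner_smul_right, vacExp, wordVec]

/-- Interchanging two adjacent letters changes the expectation value by a combination of shorter
words. -/
lemma vacExp_swap (c : ℝ) (hC : η.Cop = (c : ℂ) • 1) (p : List ℤ) (n m : ℤ) (ns : List ℤ) :
    vacExp η Ψ (p ++ n :: m :: ns) =
      vacExp η Ψ (p ++ m :: n :: ns) + n * vacExp η Ψ (p ++ n :: ns)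
        - m * vacExp η Ψ (p ++ m :: ns) - ((n - m : ℤ) : ℂ) * vacExp η Ψ (p ++ (n + m) :: ns)
        + (if n + m = 0 then ((n ^ 3 - n : ℤ) : ℂ) / 12 * c else 0) * vacExp η Ψ (p ++ ns) := by
  have hk : wordVec η Ψ (n :: m :: ns) =
      wordVec η Ψ (m :: n :: ns) + (n : ℂ) • wordVec η Ψ (n :: ns)
        - (m : ℂ) • wordVec η Ψ (m :: ns) - ((n - m : ℤ) : ℂ) • wordVec η Ψ ((n + m) :: ns)
        + (if n + m = 0 then ((n ^ 3 - n : ℤ) : ℂ) / 12 * c else 0) • wordVec η Ψ ns := by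
    have hb := congrArg (fun f : Module.End ℂ V => f (wordVec η Ψ ns)) (η.comm n m)
    simp only [wordVec_cons]
    rw [Ring.lie_def, hC] at hb
    split_ifs at hb ⊢ with h0
    · simp only [LinearMap.sub_apply, LinearMap.add_apply, LinearMap.smul_apply,
        Module.End.mul_apply, Module.End.one_apply, smul_smul] at hb
      rw [sub_eq_iff_eq_add] at hb
      rw [hb]
      abel
    · simp only [LinearMap.sub_apply, LinearMap.add_apply, LinearMap.smul_apply,
        Module.End.mul_apply, LinearMap.zero_apply] at hb
      rw [sub_eq_iff_eq_add] at hb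
      rw [hb, zero_smul]
      abel
  simp only [vacExp, wordVec_append]
  rw [hk]
  simp only [map_add, map_sub, map_smul, inner_add_right, inner_sub_right, inner_smul_right]

end OneRep

section TwoReps

variable {V₁ V₂ : Type*}
    [NormedAddCommGroup V₁] [InnerProductSpace ℂ V₁]
    [NormedAddCommGroup V₂] [InnerProductSpace ℂ V₂]
    {c h : ℝ} {η₁ : KRep V₁} {η₂ : KRep V₂} {Ψ₁ : V₁} {Ψ₂ : V₂}

/-- If expectation values agree on words of length at most `N`, they agree on words of length
`N + 1` containing a positive letter: that letter is commuted to the right end. -/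
lemma vacExp_eq_of_pos (H₁ : IsVacuum c h η₁ Ψ₁) (H₂ : IsVacuum c h η₂ Ψ₂)
    (N : ℕ)
    (ih : ∀ ns : List ℤ, ns.length ≤ N → vacExp η₁ Ψ₁ ns = vacExp η₂ Ψ₂ ns)
    (n : ℤ) (hn : 0 < n) (ns p : List ℤ) (hlen : p.length + ns.length ≤ N) :
    vacExp η₁ Ψ₁ (p ++ n :: ns) = vacExp η₂ Ψ₂ (p ++ n :: ns) := by
  induction ns generalizing p with
  | nil =>
    rw [vacExp_append_pos η₁ Ψ₁ h H₁.eigen n hn, vacExp_append_pos η₂ Ψ₂ h H₂.eigen n hn,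
      ih p (by simpa using hlen)]
  | cons m ms ihms =>
    rw [List.length_cons] at hlen
    have hs := ihms (p ++ [m]) (by rw [List.length_append, List.length_singleton]; omega)
    rw [List.append_assoc, List.singleton_append] at hs
    have hshort : ∀ k : ℤ, vacExp η₁ Ψ₁ (p ++ k :: ms) = vacExp η₂ Ψ₂ (p ++ k :: ms) := fun k =>
      ih _ (by rw [List.length_append, List.length_cons]; omega)
    rw [vacExp_swap η₁ Ψ₁ c H₁.charge, vacExp_swap η₂ Ψ₂ c H₂.charge, hs, hshort, hshort, hshort,
      ih (p ++ ms) (by rw [List.length_append]; omega)]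

lemma vacExp_eq (H₁ : IsVacuum c h η₁ Ψ₁) (H₂ : IsVacuum c h η₂ Ψ₂)
    (N : ℕ) (ns : List ℤ) (hlen : ns.length ≤ N) :
    vacExp η₁ Ψ₁ ns = vacExp η₂ Ψ₂ ns := by
  have hnil : vacExp η₁ Ψ₁ [] = vacExp η₂ Ψ₂ [] := by
    simp [vacExp, wordVec, inner_self_eq_norm_sq_to_K, H₁.norm_eq, H₂.norm_eq]
  induction N generalizing ns with
  | zero =>
    obtain rfl : ns = [] := List.length_eq_zero_iff.mp (by omega)
    exact hnil
  | succ N ih =>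
    cases ns with
    | nil => exact hnil
    | cons n ms =>
      have hms : ms.length ≤ N := by simpa using hlen
      rcases lt_trichotomy n 0 with hn | rfl | hn
      · rw [vacExp_neg_cons η₁ Ψ₁ h H₁.eigen n hn, vacExp_neg_cons η₂ Ψ₂ h H₂.eigen n hn, ih ms hms]
      · simp [vacExp, wordVec_cons, KRep.K_zero]
      · exact vacExp_eq_of_pos H₁ H₂ N ih n hn ms [] (by simpa using hms)

lemma inner_wordVec_eq (H₁ : IsVacuum c h η₁ Ψ₁) (H₂ : IsVacuum c h η₂ Ψ₂)
    (ms ns : List ℤ) :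
    ⟪wordVec η₁ Ψ₁ ms, wordVec η₁ Ψ₁ ns⟫ = ⟪wordVec η₂ Ψ₂ ms, wordVec η₂ Ψ₂ ns⟫ := by
  induction ms generalizing ns with
  | nil => exact vacExp_eq H₁ H₂ _ ns le_rfl
  | cons m ms ih =>
    rw [wordVec_cons, wordVec_cons, η₁.unitary, η₂.unitary, ← wordVec_cons, ← wordVec_cons, ih]

lemma inner_wordMap_eq (H₁ : IsVacuum c h η₁ Ψ₁) (H₂ : IsVacuum c h η₂ Ψ₂)
    (a b : List ℤ →₀ ℂ) :
    ⟪wordMap η₁ Ψ₁ a, wordMap η₁ Ψ₁ b⟫ = ⟪wordMap η₂ Ψ₂ a, wordMap η₂ Ψ₂ b⟫ := by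
  simp only [wordMap, Finsupp.linearCombination_apply, Finsupp.sum_inner, Finsupp.inner_sum,
    inner_smul_left, inner_smul_right,
    inner_wordVec_eq H₁ H₂]

end TwoReps

/-- Two unitary representations of `𝔎` with the same central charge `c`, each
with a cyclic unit vector `Ψᵢ` satisfying `K n Ψᵢ = h • Ψᵢ` for all `n > 0`,
are unitarily equivalent: the assignment
`η₁(k_{n₁})⋯η₁(k_{n_r})Ψ₁ ↦ η₂(k_{n₁})⋯η₂(k_{n_r})Ψ₂` extends to a
well-defined linear inner-product-preserving bijection intertwining the two
representations. -/
theorem statement7 {V₁ V₂ : Type*}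
    [NormedAddCommGroup V₁] [InnerProductSpace ℂ V₁]
    [NormedAddCommGroup V₂] [InnerProductSpace ℂ V₂]
    (c h : ℝ) (η₁ : KRep V₁) (η₂ : KRep V₂) (Ψ₁ : V₁) (Ψ₂ : V₂)
    (hC₁ : η₁.Cop = (c : ℂ) • 1) (hC₂ : η₂.Cop = (c : ℂ) • 1)
    (hΨ₁ : ‖Ψ₁‖ = 1) (hΨ₂ : ‖Ψ₂‖ = 1)
    (hev₁ : ∀ n : ℤ, 0 < n → η₁.K n Ψ₁ = (h : ℂ) • Ψ₁)
    (hev₂ : ∀ n : ℤ, 0 < n → η₂.K n Ψ₂ = (h : ℂ) • Ψ₂)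
    (hspan₁ : Submodule.span ℂ {w : V₁ | ∃ ns : List ℤ, (∀ n ∈ ns, n ≠ 0) ∧
        w = (ns.map η₁.K).prod Ψ₁} = ⊤)
    (hspan₂ : Submodule.span ℂ {w : V₂ | ∃ ns : List ℤ, (∀ n ∈ ns, n ≠ 0) ∧
        w = (ns.map η₂.K).prod Ψ₂} = ⊤) :
    ∃ W : V₁ →ₗ[ℂ] V₂, Function.Bijective W ∧
      (∀ u v : V₁, ⟪W u, W v⟫ = ⟪u, v⟫) ∧
      W Ψ₁ = Ψ₂ ∧
      (∀ ns : List ℤ, (∀ n ∈ ns, n ≠ 0) →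
        W ((ns.map η₁.K).prod Ψ₁) = (ns.map η₂.K).prod Ψ₂) ∧
      (∀ (n : ℤ) (v : V₁), W (η₁.K n v) = η₂.K n (W v)) ∧
      (∀ v : V₁, W (η₁.Cop v) = η₂.Cop (W v)) := by
  have hinner := inner_wordMap_eq (IsVacuum.mk hC₁ hΨ₁ hev₁) (IsVacuum.mk hC₂ hΨ₂ hev₂)
  have hsurj₁ := wordMap_surjective η₁ Ψ₁ hspan₁
  have hsurj₂ := wordMap_surjective η₂ Ψ₂ hspan₂
  have hker : ∀ a, wordMap η₁ Ψ₁ a = 0 → wordMap η₂ Ψ₂ a = 0 := by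
    intro a ha
    have h0 := hinner a a
    rw [ha, inner_zero_left] at h0
    exact inner_self_eq_zero.mp h0.symm
  obtain ⟨g, hg⟩ := (wordMap η₁ Ψ₁).exists_rightInverse_of_surjective
    (LinearMap.range_eq_top.mpr hsurj₁)
  have hg' : ∀ v, wordMap η₁ Ψ₁ (g v) = v := fun v => LinearMap.congr_fun hg v
  have hW : ∀ a, wordMap η₂ Ψ₂ (g (wordMap η₁ Ψ₁ a)) = wordMap η₂ Ψ₂ a := by
    intro a
    rw [← sub_eq_zero, ← map_sub]
    exact hker _ (by rw [map_sub, hg', sub_self])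
  have hWvec : ∀ ns, wordMap η₂ Ψ₂ (g (wordVec η₁ Ψ₁ ns)) = wordVec η₂ Ψ₂ ns := by
    intro ns
    simpa only [wordMap_single, one_smul] using hW (Finsupp.single ns 1)
  have hWinner : ∀ u v, ⟪wordMap η₂ Ψ₂ (g u), wordMap η₂ Ψ₂ (g v)⟫ = ⟪u, v⟫ := by
    intro u v
    rw [← hinner, hg', hg']
  refine ⟨wordMap η₂ Ψ₂ ∘ₗ g, ⟨?_, ?_⟩, hWinner, ?_, fun ns _ => hWvec ns, ?_, ?_⟩
  · rw [injective_iff_map_eq_zero]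
    intro u hu
    have h0 := hWinner u u
    rw [LinearMap.comp_apply] at hu
    rw [hu, inner_zero_left] at h0
    exact inner_self_eq_zero.mp h0.symm
  · intro v
    obtain ⟨a, rfl⟩ := hsurj₂ v
    exact ⟨wordMap η₁ Ψ₁ a, hW a⟩
  · exact hWvec []
  · intro n v
    obtain ⟨a, rfl⟩ := hsurj₁ v
    simp only [LinearMap.comp_apply]
    induction a using Finsupp.induction_linear with
    | zero => simp only [map_zero]
    | add a b ha hb => simp only [map_add, ha, hb]
    | single ns z =>
      simp only [wordMap_single, map_smul, hWvec]
      rw [← wordVec_cons, hWvec, wordVec_cons]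
  · intro v
    rw [hC₁, hC₂]
    simp only [LinearMap.smul_apply, Module.End.one_apply, map_smul]
end

section
/- Let (V, J_n, L_n) be a Sugawara system and α ∈ ℝ. Then there exists a unitary representation π of 𝔎 on V with π(k_n) = K^α_n for all n ∈ ℤ ∖ {0} and π(C) = (1 + 12α²)·id; that is, the operators K^α_n satisfy the commutation relations [K^α_r, K^α_m] = r K^α_r − m K^α_m − (r − m) K^α_{r+m} + ((1+12α²)/12)(r³ − r) δ_{r+m,0} id and the unitarity relation ⟨K^α_n u, v⟩ = ⟨u, K^α_{−n} v⟩. -/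
/-!
Write `K^α_n = (L_0 - L_n) + iα (n J_n + B_n)`, where
`B_n = sgn(n) (J_0 + J_n - 2 Σ_{k between 0 and n} J_k)`. Identifying `J_k` with `z^k`, one has
`B_n = -(1+z)(1-z^n)/(1-z)` for both signs of `n`, so `B` is characterised by `B_0 = 0` and the
recursion `B_{n+1} = B_n - J_n - J_{n+1}` valid for every integer `n`. Everything about `B` is
derived from this recursion by two-sided induction on `ℤ`:

* `B_n⁺ = -B_{-n}` (`B_adjoint`), which gives unitarity;
* `B` is a 1-cocycle for `k_n ↦ L_0 - L_n` (`L_B_cocycle`), as is `n ↦ n J_n`, which gives the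
  part of the bracket relation linear in `α`;
* `[J_k, B_m]` and `[B_r, B_m]` are explicit scalars (`comm_J_B`, `comm_B_B`), from which
  `[r J_r + B_r, m J_m + B_m] = -(r³ - r) δ_{r+m,0}` (`comm_A_A`); multiplied by `(iα)²` this is
  the correction `α² (r³ - r)` to the central term.
-/

local notation "⟪" x ", " y "⟫" => @inner ℂ _ _ x y

/-- A Sugawara system on a complex inner product space `V`: a `U(1)` current
`J` together with the associated stress-energy operators `L` (central charge
`1`), satisfying `[J_n, J_m] = n δ_{n+m,0}`, `J_n⁺ = J_{-n}`,
`[L_n, L_m] = (n-m) L_{n+m} + (1/12)(n³-n) δ_{n+m,0}`, `L_n⁺ = L_{-n}`, and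
`[L_n, J_m] = -m J_{n+m}`. -/
structure Sugawara (V : Type*) [NormedAddCommGroup V] [InnerProductSpace ℂ V] where
  J : ℤ → Module.End ℂ V
  L : ℤ → Module.End ℂ V
  commJJ : ∀ n m : ℤ, ⁅J n, J m⁆ =
    (if n + m = 0 then (n : ℂ) • (1 : Module.End ℂ V) else 0)
  unitaryJ : ∀ (n : ℤ) (u v : V), ⟪J n u, v⟫ = ⟪u, J (-n) v⟫
  commLL : ∀ n m : ℤ, ⁅L n, L m⁆ =
    ((n - m : ℤ) : ℂ) • L (n + m) +
      (if n + m = 0 then (((n ^ 3 - n : ℤ) : ℂ) / 12) • (1 : Module.End ℂ V) else 0)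
  unitaryL : ∀ (n : ℤ) (u v : V), ⟪L n u, v⟫ = ⟪u, L (-n) v⟫
  commLJ : ∀ n m : ℤ, ⁅L n, J m⁆ = (-(m : ℂ)) • J (n + m)

variable {V : Type*} [NormedAddCommGroup V] [InnerProductSpace ℂ V]
/-- `K^α_n = (L_0 - L_n) + i n α (J_n + (1/|n|)(J_0 + J_n - 2 Σ_{k=min(0,n)}^{max(0,n)} J_k))`. -/
noncomputable def Kalpha (S : Sugawara V) (α : ℝ) (n : ℤ) : Module.End ℂ V :=
  (S.L 0 - S.L n) +
    (Complex.I * (n : ℂ) * (α : ℂ)) •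
      (S.J n + ((|n| : ℤ) : ℂ)⁻¹ •
        (S.J 0 + S.J n -
          (2 : ℂ) • ∑ k ∈ Finset.Icc (min 0 n) (max 0 n), S.J k))

namespace Sugawara

/-! ### Bracket calculus

The bracket on `Module.End ℂ V` is the ring commutator; the Lie ring structure of an associative
ring is not a global instance, so its basic rules are recorded here. -/

section Bracket

variable {R : Type*} [Ring R]

lemma br_skew (x y : R) : -⁅y, x⁆ = ⁅x, y⁆ := by simp [Ring.lie_def]

lemma br_zero (x : R) : ⁅x, (0 : R)⁆ = 0 := by simp [Ring.lie_def]

lemma br_zero_left (x : R) : ⁅(0 : R), x⁆ = 0 := by simp [Ring.lie_def]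

lemma br_add_right (x y z : R) : ⁅x, y + z⁆ = ⁅x, y⁆ + ⁅x, z⁆ := by
  simp only [Ring.lie_def]; noncomm_ring

lemma br_add_left (x y z : R) : ⁅x + y, z⁆ = ⁅x, z⁆ + ⁅y, z⁆ := by
  simp only [Ring.lie_def]; noncomm_ring

lemma br_sub_right (x y z : R) : ⁅x, y - z⁆ = ⁅x, y⁆ - ⁅x, z⁆ := by
  simp only [Ring.lie_def]; noncomm_ring

lemma br_sub_left (x y z : R) : ⁅x - y, z⁆ = ⁅x, z⁆ - ⁅y, z⁆ := by
  simp only [Ring.lie_def]; noncomm_ring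

lemma br_smul_right [Algebra ℂ R] (c : ℂ) (x y : R) : ⁅x, c • y⁆ = c • ⁅x, y⁆ := by
  simp [Ring.lie_def, smul_sub]

lemma br_smul_left [Algebra ℂ R] (c : ℂ) (x y : R) : ⁅c • x, y⁆ = c • ⁅x, y⁆ := by
  simp [Ring.lie_def, smul_sub]

end Bracket

/-! ### The operators `B_n` -/

/-- Two maps from `ℤ` to an additive group agree if they agree at `0` and have equal increments. -/
lemma eq_of_step {M : Type*} [AddCommGroup M] (X Y : ℤ → M) (h0 : X 0 = Y 0)
    (h : ∀ n, X (n + 1) - X n = Y (n + 1) - Y n) (n : ℤ) : X n = Y n := by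
  induction n using Int.induction_on with
  | zero => exact h0
  | succ i ih =>
    have := h i
    rw [ih] at this
    exact sub_left_injective this
  | pred i ih =>
    have := h (-i - 1)
    rw [sub_add_cancel, ih] at this
    exact sub_right_injective this

/-- `B_n = sgn(n) (J_0 + J_n - 2 Σ_{k=min(0,n)}^{max(0,n)} J_k)`. -/
noncomputable def B (S : Sugawara V) (n : ℤ) : Module.End ℂ V :=
  (n.sign : ℂ) • (S.J 0 + S.J n -
    (2 : ℂ) • ∑ k ∈ Finset.Icc (min 0 n) (max 0 n), S.J k)

lemma B_zero (S : Sugawara V) : S.B 0 = 0 := by simp [B]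

lemma B_succ (S : Sugawara V) (n : ℤ) : S.B (n + 1) = S.B n - S.J n - S.J (n + 1) := by
  rcases lt_trichotomy n 0 with hn | rfl | hn
  · have e : Finset.Icc (min 0 n) (max 0 n) = insert n (Finset.Icc (n + 1) 0) := by
      ext k; simp only [Finset.mem_insert, Finset.mem_Icc]; omega
    have e' : Finset.Icc (min 0 (n + 1)) (max 0 (n + 1)) = Finset.Icc (n + 1) 0 := by
      ext k; simp only [Finset.mem_Icc]; omega
    rw [B, B, e, e', Finset.sum_insert (by simp), Int.sign_eq_neg_one_of_neg hn]
    rcases eq_or_ne n (-1) with rfl | h1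
    · simp
      module
    · rw [Int.sign_eq_neg_one_of_neg (by omega)]
      push_cast
      module
  · have e : Finset.Icc (0 : ℤ) 1 = {0, 1} := by
      ext k; simp only [Finset.mem_insert, Finset.mem_singleton, Finset.mem_Icc]; omega
    simp [B, e]
    module
  · have e : Finset.Icc (min 0 (n + 1)) (max 0 (n + 1)) =
        insert (n + 1) (Finset.Icc 0 n) := by
      ext k; simp only [Finset.mem_insert, Finset.mem_Icc]; omega
    have e' : Finset.Icc (min 0 n) (max 0 n) = Finset.Icc 0 n := by
      ext k; simp only [Finset.mem_Icc]; omega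
    rw [B, B, e, e', Finset.sum_insert (by simp), Int.sign_eq_one_of_pos hn,
      Int.sign_eq_one_of_pos (by omega)]
    push_cast
    module

/-- The coefficient of `iα` in `K^α_n`. -/
noncomputable def A (S : Sugawara V) (n : ℤ) : Module.End ℂ V := (n : ℂ) • S.J n + S.B n

lemma Kalpha_eq (S : Sugawara V) (α : ℝ) (n : ℤ) :
    Kalpha S α n = (S.L 0 - S.L n) + (Complex.I * α) • S.A n := by
  -- `n / |n| = sgn n`, with both sides `0` at `n = 0`
  have h : (n : ℂ) * ((|n| : ℤ) : ℂ)⁻¹ = (n.sign : ℂ) := by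
    rcases eq_or_ne n 0 with rfl | hn
    · simp
    · have : ((|n| : ℤ) : ℂ) ≠ 0 := by exact_mod_cast abs_ne_zero.mpr hn
      rw [mul_inv_eq_iff_eq_mul₀ this]
      exact_mod_cast (Int.sign_mul_abs n).symm
  rw [Kalpha, A, B, ← h]
  module

lemma B_adjoint (S : Sugawara V) (n : ℤ) (u v : V) :
    inner ℂ (S.B n u) v = -inner ℂ u (S.B (-n) v) := by
  revert n
  refine eq_of_step _ _ (by simp [B_zero]) fun n => ?_
  have h := S.B_succ (-(n + 1))
  rw [show -(n + 1) + 1 = -n by ring] at h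
  simp only [h, B_succ, LinearMap.sub_apply, inner_sub_left, inner_sub_right, unitaryJ]
  ring

lemma A_adjoint (S : Sugawara V) (n : ℤ) (u v : V) :
    inner ℂ (S.A n u) v = -inner ℂ u (S.A (-n) v) := by
  simp only [A, LinearMap.add_apply, LinearMap.smul_apply, inner_add_left, inner_add_right,
    inner_smul_left, inner_smul_right, unitaryJ, B_adjoint, map_intCast]
  push_cast
  ring

/-! ### The cocycle identity -/

/-- The increment in `m` of the cocycle identity `L_B_cocycle`. -/
lemma L_B_step (S : Sugawara V) (m r : ℤ) :
    ⁅S.L (m + 1), S.B r⁆ - ⁅S.L m, S.B r⁆ =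
      S.J m + (m : ℂ) • S.J (m + r) + (m + 1 : ℂ) • S.J (m + r + 1)
      - S.B m + S.B (m + r) + (r - m - 1 : ℂ) • (S.J (m + r) + S.J (m + r + 1)) := by
  revert r
  refine eq_of_step _ _ ?_ fun r => ?_
  · simp only [B_zero, br_zero, add_zero, Int.cast_zero]
    module
  · have h := S.B_succ (m + r)
    simp only [B_succ, br_sub_right, commLJ]
    rw [← add_assoc m r 1, h, ← add_assoc (m + 1) r 1, show m + 1 + r = m + r + 1 by ring]
    push_cast
    module

/-- With `f_n = 1 - z^n`, `∂ = z d/dz` and `ρ = (1+z)/(1-z)`, so that `B_n` is `-ρ f_n`, this says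
`f_r ∂(ρ f_m) - f_m ∂(ρ f_r) = ρ (f_r ∂f_m - f_m ∂f_r)`. -/
lemma L_B_cocycle (S : Sugawara V) (r m : ℤ) :
    ⁅S.L 0 - S.L r, S.B m⁆ - ⁅S.L 0 - S.L m, S.B r⁆ =
      (r : ℂ) • S.B r - (m : ℂ) • S.B m - (r - m : ℂ) • S.B (r + m) := by
  revert m
  refine eq_of_step _ _ ?_ fun m => ?_
  · simp [B_zero, br_zero, br_zero_left]
  · have h := S.L_B_step m r
    rw [sub_eq_iff_eq_add] at h
    simp only [br_sub_left, h]
    rw [← add_assoc, S.B_succ (r + m), S.B_succ m, add_comm m r]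
    simp only [br_sub_right, commLJ]
    rw [← add_assoc r m 1]
    simp only [zero_add]
    push_cast
    module

lemma L_A_cocycle (S : Sugawara V) (r m : ℤ) :
    ⁅S.L 0 - S.L r, S.A m⁆ - ⁅S.L 0 - S.L m, S.A r⁆ =
      (r : ℂ) • S.A r - (m : ℂ) • S.A m - (r - m : ℂ) • S.A (r + m) := by
  have h := S.L_B_cocycle r m
  rw [sub_eq_iff_eq_add] at h
  simp only [A, br_add_right, h]
  simp only [br_sub_left, br_smul_right, commLJ, zero_add, add_comm m r]
  push_cast
  module

/-! ### Commutators within the current algebra -/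

lemma commJJ' (S : Sugawara V) (n m : ℤ) :
    ⁅S.J n, S.J m⁆ = (((if n + m = 0 then n else 0 : ℤ)) : ℂ) • (1 : Module.End ℂ V) := by
  rw [commJJ]; split_ifs <;> simp

/-- For `k ≠ 0` the coefficient of `J_{-k}` in `B_m` is `sgn(k) - sgn(k + m)`; multiply by
`[J_k, J_{-k}] = k`. -/
lemma comm_J_B (S : Sugawara V) (k m : ℤ) :
    ⁅S.J k, S.B m⁆ = ((|k| - k * (k + m).sign : ℤ) : ℂ) • (1 : Module.End ℂ V) := by
  revert m
  refine eq_of_step _ _ ?_ fun m => ?_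
  · simp [B_zero, br_zero, Int.mul_sign_self]
  · rw [B_succ, br_sub_right, br_sub_right, commJJ', commJJ']
    have h : (k + (m + 1)).sign - (k + m).sign =
        (if k + m = 0 then 1 else 0) + (if k + (m + 1) = 0 then 1 else 0) := by
      rw [← add_assoc]
      generalize k + m = x
      rcases lt_trichotomy x 0 with hx | rfl | hx
      · rcases eq_or_ne x (-1) with rfl | h1
        · simp
        · rw [Int.sign_eq_neg_one_of_neg hx, Int.sign_eq_neg_one_of_neg (by omega),
            if_neg (by omega), if_neg (by omega)]; simp
      · simp
      · rw [Int.sign_eq_one_of_pos hx, Int.sign_eq_one_of_pos (by omega),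
            if_neg (by omega), if_neg (by omega)]; simp
    have h2 : |k| - k * (k + (m + 1)).sign = |k| - k * (k + m).sign
        - (if k + m = 0 then k else 0) - (if k + (m + 1) = 0 then k else 0) := by
      rw [eq_add_of_sub_eq h]
      split_ifs <;> ring
    rw [h2]
    push_cast
    module

lemma comm_B_B (S : Sugawara V) (r m : ℤ) :
    ⁅S.B r, S.B m⁆ = (((if r + m = 0 then r else 0) - r * |r| + m * |m| + (r - m) * |r + m| : ℤ) : ℂ)
      • (1 : Module.End ℂ V) := by
  revert r
  refine eq_of_step _ _ ?_ fun r => ?_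
  · simp [B_zero, br_zero_left]
  · rw [B_succ, br_sub_left, br_sub_left, comm_J_B, comm_J_B]
    have h2 : (if r + 1 + m = 0 then r + 1 else 0) - (r + 1) * |r + 1| + m * |m|
          + (r + 1 - m) * |r + 1 + m| =
        (if r + m = 0 then r else 0) - r * |r| + m * |m| + (r - m) * |r + m|
        - (|r| - r * (r + m).sign) - (|r + 1| - (r + 1) * (r + 1 + m).sign) := by
      have e1 : (r + 1) * |r + 1| = r * |r| + |r| + |r + 1| := by
        rcases lt_or_ge r 0 with h | h
        · rw [abs_of_neg h, abs_of_nonpos (by omega)]; ring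
        · rw [abs_of_nonneg h, abs_of_nonneg (by omega)]; ring
      rw [e1]
      obtain ⟨x, rfl⟩ : ∃ x, m = x - r := ⟨r + m, by ring⟩
      rw [show r + 1 + (x - r) = x + 1 by ring, show r + (x - r) = x by ring]
      rcases lt_trichotomy x 0 with hx | rfl | hx
      · rcases eq_or_ne x (-1) with rfl | h1
        · simp; ring
        · rw [Int.sign_eq_neg_one_of_neg hx, Int.sign_eq_neg_one_of_neg (by omega),
            if_neg (by omega), if_neg (by omega), abs_of_neg hx,
            abs_of_neg (by omega : x + 1 < 0)]; ring
      · simp; ring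
      · rw [Int.sign_eq_one_of_pos hx, Int.sign_eq_one_of_pos (by omega),
            if_neg (by omega), if_neg (by omega), abs_of_pos hx,
            abs_of_pos (by omega : 0 < x + 1)]; ring
    rw [h2]
    push_cast
    module

lemma comm_A_A (S : Sugawara V) (r m : ℤ) :
    ⁅S.A r, S.A m⁆ =
      ((if r + m = 0 then -(r ^ 3 - r) else 0 : ℤ) : ℂ) • (1 : Module.End ℂ V) := by
  have h1 : ⁅S.B r, S.J m⁆ = -⁅S.J m, S.B r⁆ := (br_skew _ _).symm
  simp only [A, br_add_right, br_add_left, br_smul_right, br_smul_left, h1, commJJ', comm_J_B, comm_B_B]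
  have h2 : (if r + m = 0 then -(r ^ 3 - r) else 0 : ℤ) =
      m * (r * (if r + m = 0 then r else 0)) - m * (|m| - m * (m + r).sign)
      + (r * (|r| - r * (r + m).sign)
      + ((if r + m = 0 then r else 0) - r * |r| + m * |m| + (r - m) * |r + m|)) := by
    rw [add_comm m r, ← Int.sign_mul_self_eq_abs (r + m)]
    split_ifs with h
    · obtain rfl : m = -r := by omega
      simp; ring
    · ring
  rw [h2]
  push_cast
  module

end Sugawara

/-! ### The representation -/

/-- For any Sugawara system and `α ∈ ℝ`, the assignment `k n ↦ K^α_n`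
(`n ∈ ℤ ∖ {0}`), `C ↦ (1 + 12α²)·id` gives a unitary representation of `𝔎`:
the operators `K^α_n` satisfy the bracket relations of `𝔎` with central
charge `1 + 12α²` and the unitarity relation `⟪K^α_n u, v⟫ = ⟪u, K^α_{-n} v⟫`. -/
theorem statement10 (S : Sugawara V) (α : ℝ) :
    ∃ P : KRep V, (∀ n : ℤ, n ≠ 0 → P.K n = Kalpha S α n) ∧
      P.Cop = ((1 + 12 * α ^ 2 : ℝ) : ℂ) • (1 : Module.End ℂ V) := by
  refine ⟨⟨Kalpha S α, ((1 + 12 * α ^ 2 : ℝ) : ℂ) • (1 : Module.End ℂ V), ?_, ?_, ?_, ?_, ?_⟩,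
    fun _ _ => rfl, rfl⟩
  · simp [Kalpha]
  · intro r m
    simp only [Sugawara.Kalpha_eq]
    have hLA := S.L_A_cocycle r m
    rw [sub_eq_iff_eq_add] at hLA
    have hsk : ⁅S.A r, S.L 0 - S.L m⁆ = -⁅S.L 0 - S.L m, S.A r⁆ := (Sugawara.br_skew _ _).symm
    have hLL : ⁅S.L 0 - S.L r, S.L 0 - S.L m⁆ = (r : ℂ) • (S.L 0 - S.L r)
        - (m : ℂ) • (S.L 0 - S.L m) - (r - m : ℂ) • (S.L 0 - S.L (r + m))
        + (if r + m = 0 then (((r ^ 3 - r : ℤ) : ℂ) / 12) • (1 : Module.End ℂ V) else 0) := by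
      simp only [Sugawara.br_sub_right, Sugawara.br_sub_left, S.commLL, zero_add, add_zero]
      have e0 : ∀ n : ℤ, (if n = 0 then (((n ^ 3 - n : ℤ) : ℂ) / 12) • (1 : Module.End ℂ V)
          else 0) = 0 := by
        intro n; split_ifs with h <;> simp [h]
      rw [e0 r]
      simp
      module
    rw [Sugawara.br_add_right, Sugawara.br_add_left, Sugawara.br_add_left, Sugawara.br_smul_left, Sugawara.br_smul_right, Sugawara.br_smul_left, Sugawara.br_smul_right, hLA, hsk, hLL,
      S.comm_A_A]
    have hI : Complex.I ^ 2 = -1 := Complex.I_sq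
    split_ifs with h
    · push_cast
      match_scalars <;> first | ring1 | linear_combination (-(α : ℂ) ^ 2 * (r ^ 3 - r)) * hI
    · push_cast
      module
  · intro r
    simp [Ring.lie_def]
  · intro n u v
    simp only [Sugawara.Kalpha_eq, LinearMap.add_apply, LinearMap.sub_apply, LinearMap.smul_apply,
      inner_add_left, inner_add_right, inner_sub_left, inner_sub_right, inner_smul_left,
      inner_smul_right, S.unitaryL, S.A_adjoint, map_mul, Complex.conj_I, Complex.conj_ofReal,
      neg_zero]
    ring
  · intro u v
    simp
    ring
end

section
/- Let (V, J_n, L_n) be a Sugawara system and α ∈ ℝ. Then there exists a unitary representation ρ of 𝔎 on V with ρ(k_n) = K^{(α,2)}_n for all n ∈ ℤ ∖ {0} and ρ(C) = 2(1 + 12α²)·id; that is, the operators K^{(α,2)}_n satisfy the commutation relations [K^{(α,2)}_r, K^{(α,2)}_m] = r K^{(α,2)}_r − m K^{(α,2)}_m − (r − m) K^{(α,2)}_{r+m} + (2(1+12α²)/12)(r³ − r) δ_{r+m,0} id and the unitarity relation ⟨K^{(α,2)}_n u, v⟩ = ⟨u, K^{(α,2)}_{−n} v⟩. -/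
/-!
Write `z^k` for `J_k`, so that a Laurent polynomial stands for a smeared current and `L_n` acts on
currents as the derivation `-z^n · z d/dz`. The current part of `K^{(α,2)}_n` is then `iα g_{2n}`,
where `g_a = (a/2) z^a - H_a` and `H_a = (z^a - 1)(z + 1) / (2(z - 1))`, for `n` of either sign
(`Kalpha2_eq`). Everything about `H_a` follows from `H_0 = 0` and
`H_{a+1} - H_a = (z^a + z^{a+1}) / 2` (`H_step`) by induction over `ℤ` (`eq_of_step`).

The bracket `[K_r, K_m]` has three parts. The terms in `L` are those of the rescaled generators
`l_{2n}/2`. The terms linear in `J` match because `a ↦ g_a` is a 1-cocycle (`lie_L_g`): `H_a` is a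
function times the vector field `(z^a - 1) z d/dz`, and `a z^a` is its divergence. The Heisenberg
commutators satisfy `[g_p, g_a] = δ_{p+a,0} (p - p³)/4` (`lie_g_g`), which for `p = 2r` and with
the factor `(iα)²` gives `α² (2r³ - r/2)`; together with `(2r³ - r/2)/12` from `L` this is
`(1 + 12α²)(2r³ - r/2)/12`. The constant `(1 + 12α²)/16` in `K^{(α,2)}_n` cancels from the bracket
relation unless `r + m = 0`, where it turns this cocycle into `2(1 + 12α²)(r³ - r)/12`.
Unitarity holds because `g_a(1/z) = -g_{-a}(z)` (`inner_g`).
-/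

local notation "⟪" x ", " y "⟫" => @inner ℂ _ _ x y

variable {V : Type*} [NormedAddCommGroup V] [InnerProductSpace ℂ V]
/-- `K^{(α,2)}_n = (1/2)(L_0 - L_{2n}) + i n α (J_{2n} + (1/(2|n|))(J_0 + J_{2n}
- 2 Σ_{k=min(0,2n)}^{max(0,2n)} J_k)) + ((1 + 12α²)/16)·id`. -/
noncomputable def Kalpha2 (S : Sugawara V) (α : ℝ) (n : ℤ) : Module.End ℂ V :=
  ((1 : ℂ) / 2) • (S.L 0 - S.L (2 * n)) +
    (Complex.I * (n : ℂ) * (α : ℂ)) •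
      (S.J (2 * n) + ((2 * |n| : ℤ) : ℂ)⁻¹ •
        (S.J 0 + S.J (2 * n) -
          (2 : ℂ) • ∑ k ∈ Finset.Icc (min 0 (2 * n)) (max 0 (2 * n)), S.J k)) +
    (((1 + 12 * α ^ 2 : ℝ) : ℂ) / 16) • (1 : Module.End ℂ V)

/-! ### The commutator bracket -/

section Bracket

variable {A : Type*} [Ring A]

theorem add_bracket (x y z : A) : ⁅x + y, z⁆ = ⁅x, z⁆ + ⁅y, z⁆ := by
  simp only [Ring.lie_def, add_mul, mul_add]; abel

theorem bracket_add (x y z : A) : ⁅x, y + z⁆ = ⁅x, y⁆ + ⁅x, z⁆ := by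
  simp only [Ring.lie_def, add_mul, mul_add]; abel

theorem sub_bracket (x y z : A) : ⁅x - y, z⁆ = ⁅x, z⁆ - ⁅y, z⁆ := by
  simp only [Ring.lie_def, sub_mul, mul_sub]; abel

theorem bracket_sub (x y z : A) : ⁅x, y - z⁆ = ⁅x, y⁆ - ⁅x, z⁆ := by
  simp only [Ring.lie_def, sub_mul, mul_sub]; abel

theorem smul_bracket [Algebra ℂ A] (c : ℂ) (x y : A) : ⁅c • x, y⁆ = c • ⁅x, y⁆ := by
  simp only [Ring.lie_def, smul_mul_assoc, mul_smul_comm, smul_sub]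

theorem bracket_smul [Algebra ℂ A] (c : ℂ) (x y : A) : ⁅x, c • y⁆ = c • ⁅x, y⁆ := by
  simp only [Ring.lie_def, smul_mul_assoc, mul_smul_comm, smul_sub]

theorem bracket_skew (x y : A) : -⁅y, x⁆ = ⁅x, y⁆ := by
  simp only [Ring.lie_def, neg_sub]

theorem zero_bracket (x : A) : ⁅(0 : A), x⁆ = 0 := by simp [Ring.lie_def]

theorem bracket_zero (x : A) : ⁅x, (0 : A)⁆ = 0 := by simp [Ring.lie_def]

theorem one_bracket (x : A) : ⁅(1 : A), x⁆ = 0 := by simp [Ring.lie_def]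

theorem bracket_one (x : A) : ⁅x, (1 : A)⁆ = 0 := by simp [Ring.lie_def]

end Bracket

/-! ### Induction over the integers -/

/-- Two functions on `ℤ` with the same value at `0` and the same increments agree. -/
theorem eq_of_step {M : Type*} [AddCommGroup M] (F G : ℤ → M) (h0 : F 0 = G 0)
    (h : ∀ a, F (a + 1) - F a = G (a + 1) - G a) (a : ℤ) : F a = G a := by
  induction a using Int.induction_on with
  | zero => exact h0
  | succ i ih =>
    have := h i
    rw [ih] at this
    exact sub_left_injective this
  | pred i ih =>
    have := h (-(i : ℤ) - 1)
    rw [sub_add_cancel, ih] at this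
    exact sub_right_injective this

/-! ### Smeared currents -/

namespace Sugawara

/-- The current smeared with the Laurent polynomial `(z^a - 1)(z + 1) / (2(z - 1))`, where `z^k`
stands for `J_k`: the sum of the `J_k` for `k` between `0` and `a`, the two endpoints having weight
`1/2`, with a minus sign if `a < 0`. -/
noncomputable def H (S : Sugawara V) (a : ℤ) : Module.End ℂ V :=
  ((a.sign : ℤ) : ℂ) • (∑ k ∈ Finset.Icc (min 0 a) (max 0 a), S.J k
    - ((1 : ℂ) / 2) • (S.J 0 + S.J a))

/-- The current part `(a/2) J_a - H_a` of `K^{(α,2)}_n` for `a = 2n`, up to the factor `iα`. -/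
noncomputable def g (S : Sugawara V) (a : ℤ) : Module.End ℂ V :=
  ((a : ℂ) / 2) • S.J a - S.H a

theorem H_zero (S : Sugawara V) : S.H 0 = 0 := by simp [H]

theorem g_zero (S : Sugawara V) : S.g 0 = 0 := by simp [g, H_zero]

theorem H_of_nonneg (S : Sugawara V) {a : ℤ} (ha : 0 ≤ a) :
    S.H a = ∑ k ∈ Finset.Icc 0 a, S.J k - ((1 : ℂ) / 2) • (S.J 0 + S.J a) := by
  rcases ha.eq_or_lt with rfl | h
  · simp only [H_zero, Finset.Icc_self, Finset.sum_singleton]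
    module
  · simp [H, Int.sign_eq_one_of_pos h, ha]

theorem H_of_nonpos (S : Sugawara V) {a : ℤ} (ha : a ≤ 0) :
    S.H a = -(∑ k ∈ Finset.Icc a 0, S.J k - ((1 : ℂ) / 2) • (S.J 0 + S.J a)) := by
  rcases ha.eq_or_lt with rfl | h
  · simp only [H_zero, Finset.Icc_self, Finset.sum_singleton]
    module
  · simp [H, Int.sign_eq_neg_one_of_neg h, ha]

/-- The only property of `H`, besides `H_0 = 0`, on which the commutators below depend. -/
theorem H_step (S : Sugawara V) (a : ℤ) :
    S.H (a + 1) - S.H a = ((1 : ℂ) / 2) • (S.J a + S.J (a + 1)) := by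
  rcases le_or_gt 0 a with h | h
  · have hs : Finset.Icc 0 (a + 1) = insert (a + 1) (Finset.Icc 0 a) := by
      ext k; simp only [Finset.mem_Icc, Finset.mem_insert]; omega
    rw [H_of_nonneg S h, H_of_nonneg S (by omega : 0 ≤ a + 1), hs,
      Finset.sum_insert (by simp)]
    module
  · have hs : Finset.Icc a 0 = insert a (Finset.Icc (a + 1) 0) := by
      ext k; simp only [Finset.mem_Icc, Finset.mem_insert]; omega
    rw [H_of_nonpos S h.le, H_of_nonpos S (by omega : a + 1 ≤ 0), hs,
      Finset.sum_insert (by simp)]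
    module

theorem H_succ (S : Sugawara V) (a : ℤ) :
    S.H (a + 1) = S.H a + ((1 : ℂ) / 2) • (S.J a + S.J (a + 1)) := by
  rw [← H_step]; abel

/-! ### Commutators -/

/-- The factor `(z - 1) z^p` kills the pole at `z = 1` created by differentiating `H_a`, so that the
difference `L_{p+1} - L_p` maps `H_a` to an expression in the same family. -/
theorem lie_L_sub_H (S : Sugawara V) (p a : ℤ) :
    ⁅S.L (p + 1) - S.L p, S.H a⁆ =
      (-(a : ℂ) / 2) • (S.J (p + a) + S.J (p + a + 1)) + (S.H (p + a) - S.H p)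
        + ((1 : ℂ) / 2) • (S.J (p + a) - S.J p) := by
  refine eq_of_step (fun a => ⁅S.L (p + 1) - S.L p, S.H a⁆) (fun a =>
      (-(a : ℂ) / 2) • (S.J (p + a) + S.J (p + a + 1)) + (S.H (p + a) - S.H p)
        + ((1 : ℂ) / 2) • (S.J (p + a) - S.J p)) (by simp [H_zero, bracket_zero]) (fun a => ?_) a
  have e1 : p + 1 + a = p + a + 1 := by ring
  simp only [H_succ, bracket_add, bracket_smul, sub_bracket, commLJ, ← add_assoc, e1]
  push_cast
  module

/-- The 1-cocycle identity for `g`. With `p = 2r` and `a = 2m` these are the terms linear in `J` in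
the bracket relations. -/
theorem lie_L_g (S : Sugawara V) (p a : ℤ) :
    ⁅S.L 0 - S.L p, S.g a⁆ - ⁅S.L 0 - S.L a, S.g p⁆ =
      (p : ℂ) • S.g p - (a : ℂ) • S.g a - ((p : ℂ) - a) • S.g (p + a) := by
  refine eq_of_step (fun p => ⁅S.L 0 - S.L p, S.g a⁆ - ⁅S.L 0 - S.L a, S.g p⁆) (fun p =>
      (p : ℂ) • S.g p - (a : ℂ) • S.g a - ((p : ℂ) - a) • S.g (p + a))
      (by simp [g_zero, bracket_zero, zero_bracket]) (fun p => ?_) p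
  have h := lie_L_sub_H S p a
  have e1 : p + 1 + a = p + a + 1 := by ring
  have e2 : a + (p + 1) = p + a + 1 := by ring
  have e3 : a + p = p + a := by ring
  rw [sub_bracket, sub_eq_iff_eq_add] at h
  simp only [g, H_succ, e1, bracket_add, bracket_sub, bracket_smul, sub_bracket, commLJ, h,
    e2, e3, zero_add]
  push_cast
  module

/-- The coefficient of `J_{-m}` in `H_a` is `(sign (-m) + sign (a + m)) / 2`. -/
theorem lie_H_J (S : Sugawara V) (a m : ℤ) :
    ⁅S.H a, S.J m⁆ = (((|m| - m * (a + m).sign : ℤ) : ℂ) / 2) • (1 : Module.End ℂ V) := by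
  refine eq_of_step (fun a => ⁅S.H a, S.J m⁆) (fun a =>
      (((|m| - m * (a + m).sign : ℤ) : ℂ) / 2) • (1 : Module.End ℂ V)) ?_ (fun a => ?_) a
  · have : |m| - m * (0 + m).sign = 0 := by
      rw [zero_add, Int.mul_sign_self, Int.abs_eq_natAbs, sub_self]
    simp only [H_zero, this]
    simp [zero_bracket]
  · have h : (|m| - m * (a + 1 + m).sign) - (|m| - m * (a + m).sign)
        = (if a + m = 0 then a else 0) + (if a + 1 + m = 0 then a + 1 else 0) := by
      rcases lt_trichotomy (a + m) 0 with h | h | h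
      · rcases (show a + 1 + m ≤ 0 by omega).eq_or_lt with h' | h'
        · rw [h', Int.sign_eq_neg_one_of_neg h, if_neg h.ne, if_pos rfl, Int.sign_zero]
          linarith
        · rw [Int.sign_eq_neg_one_of_neg h, Int.sign_eq_neg_one_of_neg h', if_neg h.ne,
            if_neg h'.ne]
          ring
      · have h' : 0 < a + 1 + m := by omega
        rw [h, Int.sign_eq_one_of_pos h', if_neg h'.ne', if_pos rfl, Int.sign_zero]
        linarith
      · have h' : 0 < a + 1 + m := by omega
        rw [Int.sign_eq_one_of_pos h, Int.sign_eq_one_of_pos h', if_neg h.ne', if_neg h'.ne']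
        ring
    simp only [H_succ, add_bracket, smul_bracket, commJJ]
    rw [add_sub_cancel_left, ← sub_smul, ← sub_div, ← Int.cast_sub, h]
    split_ifs <;> push_cast <;> module

theorem lie_J_H (S : Sugawara V) (m a : ℤ) :
    ⁅S.J m, S.H a⁆ = (-((|m| - m * (a + m).sign : ℤ) : ℂ) / 2) • (1 : Module.End ℂ V) := by
  rw [← bracket_skew, lie_H_J]
  module

/-- The closed form arises by summing `lie_H_J` over the steps of `H_b`. -/
theorem lie_H_H (S : Sugawara V) (a b : ℤ) :
    ⁅S.H a, S.H b⁆ = (((b * |b| - a * |a| + (a - b) * |a + b|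
      + (if a + b = 0 then a else 0) : ℤ) : ℂ) / 4) • (1 : Module.End ℂ V) := by
  refine eq_of_step (fun b => ⁅S.H a, S.H b⁆) (fun b => (((b * |b| - a * |a| + (a - b) * |a + b|
      + (if a + b = 0 then a else 0) : ℤ) : ℂ) / 4) • (1 : Module.End ℂ V)) ?_ (fun b => ?_) b
  · have : ((0:ℤ) * |0| - a * |a| + (a - 0) * |a + 0| + (if a + 0 = 0 then a else 0)) = 0 := by
      rw [add_zero]
      split_ifs with h
      · simp [h]
      · ring
    simp only [H_zero, this]
    simp [bracket_zero]
  · have key : (((b + 1) * |b + 1| - a * |a| + (a - (b + 1)) * |a + (b + 1)|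
          + (if a + (b + 1) = 0 then a else 0))
        - (b * |b| - a * |a| + (a - b) * |a + b| + (if a + b = 0 then a else 0)))
        = (|b| - b * (a + b).sign) + (|b + 1| - (b + 1) * (a + (b + 1)).sign) := by
      have h1 : (b + 1) * |b + 1| - b * |b| = |b| + |b + 1| := by
        rcases le_or_gt 0 b with h | h
        · rw [abs_of_nonneg h, abs_of_nonneg (by omega)]; ring
        · rw [abs_of_neg h, abs_of_nonpos (by omega)]; ring
      have h2 : (a - (b + 1)) * |a + (b + 1)| + (if a + (b + 1) = 0 then a else 0)
          - (a - b) * |a + b| - (if a + b = 0 then a else 0)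
          = - b * (a + b).sign - (b + 1) * (a + (b + 1)).sign := by
        rcases lt_trichotomy (a + b) 0 with h | h | h
        · rcases (show a + (b + 1) ≤ 0 by omega).eq_or_lt with h' | h'
          · rw [h', Int.sign_eq_neg_one_of_neg h, if_neg h.ne, if_pos rfl, Int.sign_zero,
              abs_of_neg h, abs_zero]
            obtain rfl : a = -(b + 1) := by omega
            ring
          · rw [Int.sign_eq_neg_one_of_neg h, Int.sign_eq_neg_one_of_neg h', if_neg h.ne,
              if_neg h'.ne, abs_of_neg h, abs_of_neg h']
            ring
        · have h' : 0 < a + (b + 1) := by omega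
          rw [h, Int.sign_eq_one_of_pos h', if_neg h'.ne', if_pos rfl, Int.sign_zero,
            abs_of_pos h', abs_zero]
          obtain rfl : a = -b := by omega
          ring
        · have h' : 0 < a + (b + 1) := by omega
          rw [Int.sign_eq_one_of_pos h, Int.sign_eq_one_of_pos h', if_neg h.ne', if_neg h'.ne',
            abs_of_pos h, abs_of_pos h']
          ring
      linarith
    simp only [H_succ, bracket_add, bracket_smul, lie_H_J]
    rw [add_sub_cancel_left, ← sub_smul, ← sub_div, ← Int.cast_sub, key]
    push_cast
    module

/-- The Heisenberg cocycle on the `g_a` is a multiple of the Virasoro cocycle: the nonlocal parts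
`|p|`, `|a|`, `|p + a|` of the four commutators cancel. -/
theorem lie_g_g (S : Sugawara V) (p a : ℤ) :
    ⁅S.g p, S.g a⁆ = (if p + a = 0 then (((p - p ^ 3 : ℤ) : ℂ) / 4) • (1 : Module.End ℂ V)
      else 0) := by
  have hs : (((a ^ 2 - p ^ 2) * (p + a).sign : ℤ) : ℂ) = (((a - p) * |p + a| : ℤ) : ℂ) := by
    congr 1
    rw [← Int.sign_mul_self_eq_abs]
    ring
  simp only [g, bracket_sub, sub_bracket, bracket_smul, smul_bracket, lie_H_H, lie_H_J, lie_J_H,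
    commJJ, add_comm a p]
  have hp : p + a = 0 → (a : ℂ) = -p := fun h => by
    rw [show a = -p by omega]; push_cast; ring
  push_cast at hs ⊢
  split_ifs with h
  · simp only [smul_smul, ← sub_smul]
    congr 1
    rw [hp h, h]
    simp
    ring
  · simp only [smul_smul, smul_zero, zero_sub, ← sub_smul, ← neg_smul]
    rw [← zero_smul ℂ (1 : Module.End ℂ V)]
    congr 1
    linear_combination (1 / 4) * hs

/-! ### Adjoints -/

/-- `H_a(1/z) = -H_{-a}(z)`. -/
theorem inner_H (S : Sugawara V) (a : ℤ) (u v : V) :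
    ⟪S.H a u, v⟫ = -⟪u, S.H (-a) v⟫ := by
  refine eq_of_step (fun a => ⟪S.H a u, v⟫) (fun a => -⟪u, S.H (-a) v⟫) (by simp [H_zero])
    (fun a => ?_) a
  have h := H_succ S (-(a + 1))
  rw [show -(a + 1) + 1 = -a by ring] at h
  simp only [H_succ, h, LinearMap.add_apply, LinearMap.smul_apply, inner_add_left, inner_add_right,
    inner_smul_left, inner_smul_right, unitaryJ]
  simp [Complex.conj_ofNat]
  ring

theorem inner_g (S : Sugawara V) (a : ℤ) (u v : V) :
    ⟪S.g a u, v⟫ = -⟪u, S.g (-a) v⟫ := by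
  simp only [g, LinearMap.sub_apply, LinearMap.smul_apply, inner_sub_left, inner_sub_right,
    inner_smul_left, inner_smul_right, unitaryJ, inner_H]
  simp [Complex.conj_ofNat]
  ring

end Sugawara

/-! ### The operators `K^{(α,2)}_n` -/

open Sugawara

theorem Kalpha2_eq (S : Sugawara V) (α : ℝ) {n : ℤ} (hn : n ≠ 0) :
    Kalpha2 S α n = ((1 : ℂ) / 2) • (S.L 0 - S.L (2 * n)) + (Complex.I * α) • S.g (2 * n)
      + (((1 + 12 * α ^ 2 : ℝ) : ℂ) / 16) • (1 : Module.End ℂ V) := by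
  unfold Kalpha2
  congr 2
  have hs : (n : ℂ) * ((2 * |n| : ℤ) : ℂ)⁻¹ = ((n.sign : ℤ) : ℂ) / 2 := by
    have h : n = n.sign * |n| := (Int.sign_mul_abs n).symm
    have h' : ((|n| : ℤ) : ℂ) ≠ 0 := by exact_mod_cast abs_ne_zero.mpr hn
    field_simp
    rw [Int.cast_mul]
    nth_rewrite 1 [h]
    push_cast
    ring
  have h2 : (2 * n).sign = n.sign := by
    rw [Int.sign_mul]
    exact one_mul _
  rw [g, H, h2]
  set T := ∑ k ∈ Finset.Icc (min 0 (2 * n)) (max 0 (2 * n)), S.J k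
  have : (Complex.I * n * α) • (S.J (2 * n) + ((2 * |n| : ℤ) : ℂ)⁻¹ •
      (S.J 0 + S.J (2 * n) - (2 : ℂ) • T)) = (Complex.I * α) • ((n : ℂ) • S.J (2 * n) +
      ((n : ℂ) * ((2 * |n| : ℤ) : ℂ)⁻¹) • (S.J 0 + S.J (2 * n) - (2 : ℂ) • T)) := by module
  rw [this, hs]
  push_cast
  module

/-- The bracket relations for nonzero indices, the value at `r + m = 0` being replaced by `0`
because `Kalpha2 S α 0` is the scalar `(1 + 12α²)/16` rather than the image of `k_0 = 0`. -/
theorem Kalpha2_comm (S : Sugawara V) (α : ℝ) {r m : ℤ} (hr : r ≠ 0) (hm : m ≠ 0) :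
    ⁅Kalpha2 S α r, Kalpha2 S α m⁆ =
      (r : ℂ) • Kalpha2 S α r - (m : ℂ) • Kalpha2 S α m
        - ((r - m : ℤ) : ℂ) • (if r + m = 0 then 0 else Kalpha2 S α (r + m))
        + (if r + m = 0 then (((r ^ 3 - r : ℤ) : ℂ) / 12) •
          (((2 * (1 + 12 * α ^ 2) : ℝ) : ℂ) • (1 : Module.End ℂ V)) else 0) := by
  rw [Kalpha2_eq S α hr, Kalpha2_eq S α hm]
  have hc := lie_L_g S (2 * r) (2 * m)
  rw [sub_eq_iff_eq_add] at hc
  have hI (X : Module.End ℂ V) :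
      (Complex.I * α) • (Complex.I * α) • X = (-(α : ℂ) ^ 2) • X := by
    rw [smul_smul]
    congr 1
    linear_combination (α : ℂ) ^ 2 * Complex.I_mul_I
  simp only [bracket_add, add_bracket, bracket_smul, smul_bracket, one_bracket, bracket_one, hc,
    lie_g_g, smul_zero, add_zero]
  rw [← bracket_skew (S.g (2 * r)) (S.L 0 - S.L (2 * m))]
  have e : 2 * r + 2 * m = 0 ↔ r + m = 0 := by omega
  have hLL : ⁅S.L 0 - S.L (2 * r), S.L 0 - S.L (2 * m)⁆
      = (2 * r : ℂ) • (S.L 0 - S.L (2 * r)) - (2 * m : ℂ) • (S.L 0 - S.L (2 * m))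
        - (2 * r - 2 * m : ℂ) • (S.L 0 - S.L (2 * (r + m)))
        + (if r + m = 0 then (((8 * r ^ 3 - 2 * r : ℤ) : ℂ) / 12) • (1 : Module.End ℂ V)
          else 0) := by
    simp only [bracket_sub, sub_bracket, commLL, hr, hm, mul_eq_zero, OfNat.ofNat_ne_zero,
      false_or, zero_add, add_zero, ← mul_add, if_true, if_false]
    split_ifs <;> push_cast <;> module
  rw [hLL]
  simp only [e]
  split_ifs with h
  · obtain rfl : m = -r := by omega
    simp only [← mul_add, add_neg_cancel, mul_zero, g_zero, smul_add, hI]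
    push_cast
    module
  · rw [Kalpha2_eq S α h, ← mul_add]
    push_cast
    module

/-- For any Sugawara system and `α ∈ ℝ`, the assignment `k n ↦ K^{(α,2)}_n`
(`n ∈ ℤ ∖ {0}`), `C ↦ 2(1 + 12α²)·id` gives a unitary representation of `𝔎`:
the operators `K^{(α,2)}_n` satisfy the bracket relations of `𝔎` with central
charge `2(1 + 12α²)` and the unitarity relation
`⟪K^{(α,2)}_n u, v⟫ = ⟪u, K^{(α,2)}_{-n} v⟫`. -/
theorem statement11 (S : Sugawara V) (α : ℝ) :
    ∃ P : KRep V, (∀ n : ℤ, n ≠ 0 → P.K n = Kalpha2 S α n) ∧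
      P.Cop = ((2 * (1 + 12 * α ^ 2) : ℝ) : ℂ) • (1 : Module.End ℂ V) := by
  refine ⟨{
    K := fun n => if n = 0 then 0 else Kalpha2 S α n
    Cop := ((2 * (1 + 12 * α ^ 2) : ℝ) : ℂ) • (1 : Module.End ℂ V)
    K_zero := if_pos rfl
    comm := fun r m => ?_
    commC := fun r => ?_
    unitary := fun n u v => ?_
    unitaryC := fun u v => ?_ }, fun n hn => if_neg hn, rfl⟩
  · by_cases hr : r = 0
    · subst hr
      by_cases hm : m = 0 <;> simp [hm, zero_bracket]
    by_cases hm : m = 0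
    · simp [hm, hr, bracket_zero]
    simp only [hr, hm, if_false]
    exact Kalpha2_comm S α hr hm
  · rw [bracket_smul, bracket_one, smul_zero]
  · by_cases hn : n = 0
    · simp [hn]
    simp only [hn, neg_eq_zero, if_false, Kalpha2_eq S α hn, Kalpha2_eq S α (neg_ne_zero.mpr hn)]
    simp only [LinearMap.add_apply, LinearMap.sub_apply, LinearMap.smul_apply, inner_add_left,
      inner_add_right, inner_sub_left, inner_sub_right, inner_smul_left, inner_smul_right,
      unitaryL, inner_g, Module.End.one_apply]
    simp [mul_neg, Complex.conj_ofNat]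
  · simp only [LinearMap.smul_apply, inner_smul_left, inner_smul_right, Complex.conj_ofReal,
      Module.End.one_apply]
end

section
/- Let (V, J_n, L_n) be a Sugawara system with vacuum vector Ω, and let α ∈ ℝ. Then K^{(α,2)}_n Ω = ((1 + 12α²)/16) Ω for every integer n > 0, and there exists μ ∈ ℂ, with μ ≠ 0 whenever α ≠ 0, such that the vector Φ := J_{−1}Ω + μΩ satisfies K^{(α,2)}_n Φ = ((9 + 12α²)/16) Φ for every integer n > 0. -/
/-! The non-negative modes annihilate the vacuum, so `K_n Ω` reduces to the scalar term
`c = (1 + 12α²)/16`. On `J₋₁ Ω` the commutators give `L₀ J₋₁ Ω = J₋₁ Ω`, `L_{2n} J₋₁ Ω = 0`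
and `J_k J₋₁ Ω = δ_{k,1} Ω` for `k ≥ 0`; since `1 ∈ [0, 2n]`, only the sum over `k` contributes
a current term, and `K_n J₋₁ Ω = (c + 1/2) J₋₁ Ω - iα Ω`. Hence `J₋₁ Ω + μ Ω` is an eigenvector
with eigenvalue `c + 1/2` exactly when `(c + 1/2) μ = c μ - iα`, i.e. `μ = -2iα`, which does not
depend on `n`. -/

local notation "⟪" x ", " y "⟫" => @inner ℂ _ _ x y

variable {V : Type*} [NormedAddCommGroup V] [InnerProductSpace ℂ V]
lemma J_J_neg_one_vacuum (S : Sugawara V) (Ω : V)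
    (hJΩ : ∀ n : ℤ, 0 ≤ n → S.J n Ω = 0) (k : ℤ) (hk : 0 ≤ k) :
    S.J k (S.J (-1) Ω) = if k = 1 then Ω else 0 := by
  have h := congrArg (fun T : Module.End ℂ V => T Ω) (S.commJJ k (-1))
  simp only [Ring.lie_def, LinearMap.sub_apply, Module.End.mul_apply, hJΩ k hk, map_zero,
    sub_zero] at h
  rw [h]
  by_cases h1 : k = 1
  · subst h1
    simp
  · have h2 : ¬ (k + -1 = 0) := by omega
    simp [h1, h2]

lemma L_J_neg_one_vacuum (S : Sugawara V) (Ω : V)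
    (hLΩ : ∀ n : ℤ, 0 ≤ n → S.L n Ω = 0) (k : ℤ) (hk : 0 ≤ k) :
    S.L k (S.J (-1) Ω) = S.J (k - 1) Ω := by
  have h := congrArg (fun T : Module.End ℂ V => T Ω) (S.commLJ k (-1))
  simp only [Ring.lie_def, LinearMap.sub_apply, Module.End.mul_apply, hLΩ k hk, map_zero,
    sub_zero] at h
  rw [h]
  simp [sub_eq_add_neg]

lemma Kalpha2_vacuum (S : Sugawara V) (Ω : V)
    (hJΩ : ∀ n : ℤ, 0 ≤ n → S.J n Ω = 0) (hLΩ : ∀ n : ℤ, 0 ≤ n → S.L n Ω = 0)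
    (α : ℝ) (n : ℤ) (hn : 0 < n) :
    Kalpha2 S α n Ω = (((1 + 12 * α ^ 2) / 16 : ℝ) : ℂ) • Ω := by
  have hmin : min 0 (2 * n) = 0 := min_eq_left (by omega)
  have hsum : ∑ k ∈ Finset.Icc 0 (max 0 (2 * n)), S.J k Ω = 0 :=
    Finset.sum_eq_zero fun k hk => hJΩ k (Finset.mem_Icc.mp hk).1
  simp only [Kalpha2, LinearMap.add_apply, LinearMap.sub_apply, LinearMap.smul_apply,
    LinearMap.sum_apply, Module.End.one_apply, hmin, hsum, hJΩ 0 le_rfl, hLΩ 0 le_rfl,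
    hJΩ (2 * n) (by omega), hLΩ (2 * n) (by omega)]
  simp

lemma Kalpha2_J_neg_one_vacuum (S : Sugawara V) (Ω : V)
    (hJΩ : ∀ n : ℤ, 0 ≤ n → S.J n Ω = 0) (hLΩ : ∀ n : ℤ, 0 ≤ n → S.L n Ω = 0)
    (α : ℝ) (n : ℤ) (hn : 0 < n) :
    Kalpha2 S α n (S.J (-1) Ω) =
      (((9 + 12 * α ^ 2) / 16 : ℝ) : ℂ) • S.J (-1) Ω - (Complex.I * α) • Ω := by
  have hmin : min 0 (2 * n) = 0 := min_eq_left (by omega)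
  have hmax : max 0 (2 * n) = 2 * n := max_eq_right (by omega)
  have hsum : ∑ k ∈ Finset.Icc 0 (2 * n), S.J k (S.J (-1) Ω) = Ω := by
    rw [Finset.sum_congr rfl fun k hk =>
      J_J_neg_one_vacuum S Ω hJΩ k (Finset.mem_Icc.mp hk).1]
    rw [Finset.sum_ite_eq' (Finset.Icc 0 (2 * n)) 1 fun _ => Ω,
      if_pos (Finset.mem_Icc.mpr (by omega))]
  have hJ0 : S.J 0 (S.J (-1) Ω) = 0 := by
    rw [J_J_neg_one_vacuum S Ω hJΩ 0 le_rfl, if_neg (by omega)]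
  have hJ2 : S.J (2 * n) (S.J (-1) Ω) = 0 := by
    rw [J_J_neg_one_vacuum S Ω hJΩ _ (by omega), if_neg (by omega)]
  have hL0 : S.L 0 (S.J (-1) Ω) = S.J (-1) Ω := by
    simpa using L_J_neg_one_vacuum S Ω hLΩ 0 le_rfl
  have hL2 : S.L (2 * n) (S.J (-1) Ω) = 0 := by
    rw [L_J_neg_one_vacuum S Ω hLΩ _ (by omega), hJΩ _ (by omega)]
  have hn0 : (n : ℂ) ≠ 0 := by exact_mod_cast hn.ne'
  simp only [Kalpha2, LinearMap.add_apply, LinearMap.sub_apply, LinearMap.smul_apply,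
    LinearMap.sum_apply, Module.End.one_apply, hmin, hmax, hsum, hJ0, hJ2, hL0, hL2,
    abs_of_pos hn]
  push_cast
  match_scalars
  · ring
  · field_simp

/-- For a Sugawara system with vacuum vector `Ω` (a unit vector annihilated by
`J n` and `L n` for all `n ≥ 0`) and `α ∈ ℝ`:
`K^{(α,2)}_n Ω = ((1 + 12α²)/16) • Ω` for every `n > 0`, and there is `μ ∈ ℂ`
(nonzero whenever `α ≠ 0`) such that `Φ := J₋₁ Ω + μ • Ω` satisfies
`K^{(α,2)}_n Φ = ((9 + 12α²)/16) • Φ` for every `n > 0`. -/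
theorem statement12 (S : Sugawara V) (Ω : V) (hΩ : ‖Ω‖ = 1)
    (hJΩ : ∀ n : ℤ, 0 ≤ n → S.J n Ω = 0) (hLΩ : ∀ n : ℤ, 0 ≤ n → S.L n Ω = 0)
    (α : ℝ) :
    (∀ n : ℤ, 0 < n →
      Kalpha2 S α n Ω = (((1 + 12 * α ^ 2) / 16 : ℝ) : ℂ) • Ω) ∧
    ∃ μ : ℂ, (α ≠ 0 → μ ≠ 0) ∧
      ∀ n : ℤ, 0 < n →
        Kalpha2 S α n (S.J (-1) Ω + μ • Ω) =
          (((9 + 12 * α ^ 2) / 16 : ℝ) : ℂ) • (S.J (-1) Ω + μ • Ω) := by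
  refine ⟨Kalpha2_vacuum S Ω hJΩ hLΩ α, -(2 * Complex.I * α), fun hα => ?_, fun n hn => ?_⟩
  · simpa using hα
  · rw [map_add, map_smul, Kalpha2_vacuum S Ω hJΩ hLΩ α n hn,
      Kalpha2_J_neg_one_vacuum S Ω hJΩ hLΩ α n hn]
    push_cast
    match_scalars
    · ring
    · ring
end
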